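/- arXiv:1508.05789 — 2 statements merged into one kernel-verified Lean document; each statement's English description precedes it below -/
import Mathlib

section
/- Let n ≥ 1, let d : Fin n → ℝ, and let v : Δₙ → ℝⁿ be a continuous function on the standard simplex Δₙ = {λ ∈ ℝⁿ : λᵢ ≥ 0, Σλᵢ = 1}. Suppose {1,…,n} is partitioned into sets K₁ and K₂ (either possibly empty) such that: (i) for all λ ∈ Δₙ, Σᵢ λᵢ vᵢ(λ) = Σᵢ λᵢ dᵢ; (ii) for all k ∈ K₁ and all λ ∈ Δₙ with λₖ = 0, one has vₖ(λ) < dₖ; (iii) for all k ∈ K₂ and all λ ∈ Δₙ, one has vₖ(λ) ≤ dₖ. Then there exists λ* ∈ Δₙ with v(λ*) = d. -/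
open Finset

/-- A finite set `s` is undominated for a family of rankings `r` if no point lies, for every
ranking, strictly above the minimum of `s`. -/
def Undominated {ι T α : Type*} [LE α] (r : ι → T → α) (s : Finset T) : Prop :=
  ∀ y, ∃ i, ∀ x ∈ s, r i y ≤ r i x

section Scarf

variable {ι T α : Type*} [Fintype ι] [DecidableEq ι] [LinearOrder α]

/-- If `s` has one element fewer than there are rankings, then the map sending a ranking to the
point of `s` that minimises it has exactly one collision. -/
lemma Undominated.exists_argmin {r : ι → T → α} (hr : ∀ i, Function.Injective (r i))
    {s : Finset T} (hs : Undominated r s) (hcard : s.card + 1 = Fintype.card ι)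
    (hne : s.Nonempty) :
    ∃ (μ : ι → T) (a b : ι), (∀ i, μ i ∈ s) ∧ (∀ i, ∀ x ∈ s, r i (μ i) ≤ r i x) ∧
      a ≠ b ∧ μ a = μ b ∧ (∀ x ∈ s, ∃ i, i ≠ a ∧ μ i = x) ∧ (∀ x ∈ s, ∃ i, i ≠ b ∧ μ i = x) ∧
      Set.InjOn μ {a}ᶜ := by
  choose μ hμs hμ using fun i => s.exists_min_image (r i) hne
  have hsurj : ∀ x ∈ s, ∃ i, μ i = x := fun x hx => by
    obtain ⟨i, hi⟩ := hs x
    exact ⟨i, hr i (le_antisymm (hμ i x hx) (hi _ (hμs i)))⟩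
  obtain ⟨a, -, b, -, hab, hμab⟩ := Finset.exists_ne_map_eq_of_card_lt_of_maps_to
    (s := (univ : Finset ι)) (t := s) (f := μ) (by rw [card_univ]; lia) (fun i _ => hμs i)
  have hsurja : ∀ x ∈ s, ∃ i, i ≠ a ∧ μ i = x := fun x hx => by
    obtain ⟨i, rfl⟩ := hsurj x hx
    by_cases hi : i = a
    · exact ⟨b, hab.symm, by rw [hi, hμab]⟩
    · exact ⟨i, hi, rfl⟩
  have hsurjb : ∀ x ∈ s, ∃ i, i ≠ b ∧ μ i = x := fun x hx => by
    obtain ⟨i, rfl⟩ := hsurj x hx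
    by_cases hi : i = b
    · exact ⟨a, hab, by rw [hi, hμab]⟩
    · exact ⟨i, hi, rfl⟩
  have hinj : Set.InjOn μ (univ.erase a : Finset ι) := by
    refine Finset.injOn_of_surjOn_of_card_le (t := s) μ (fun i _ => hμs i) ?_ ?_
    · intro x hx
      obtain ⟨i, hi, hix⟩ := hsurja x hx
      exact ⟨i, by simpa using hi, hix⟩
    · rw [card_erase_of_mem (mem_univ a), card_univ]; lia
  exact ⟨μ, a, b, hμs, hμ, hab, hμab, hsurja, hsurjb, by
    simpa [Set.compl_eq_univ_sdiff] using hinj⟩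

/-- An undominated set with one element fewer than there are rankings, which becomes dominated when
any one ranking is dropped, extends to exactly two undominated sets by adding a point. -/
lemma Undominated.ncard_extensions [Fintype T] {r : ι → T → α} (hr : ∀ i, Function.Injective (r i))
    {s : Finset T} (hs : Undominated r s) (hcard : s.card + 1 = Fintype.card ι)
    (hne : s.Nonempty) (hM : ∀ a, ∃ y, ∀ i, i ≠ a → ∃ x ∈ s, r i x < r i y) :
    {t : Finset T | Undominated r t ∧ s ⊆ t ∧ t.card = Fintype.card ι}.ncard = 2 := by
  classical
  obtain ⟨μ, a, b, hμs, hμ, hab, hμab, hsa, hsb, hinj⟩ := hs.exists_argmin hr hcard hne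
  have hcol : ∀ i, μ i = μ a → i = a ∨ i = b := fun i hi =>
    or_iff_not_imp_left.2 fun hia => hinj hia hab.symm (hi.trans hμab)
  have hgex : ∀ k, ∃ g, (∀ i, i ≠ k → r i (μ i) < r i g) ∧
      ∀ y, (∀ i, i ≠ k → r i (μ i) < r i y) → r k y ≤ r k g := fun k => by
    obtain ⟨y, hy⟩ := hM k
    obtain ⟨g, hg, hmax⟩ := (univ.filter fun y => ∀ i, i ≠ k → r i (μ i) < r i y).exists_max_image
      (r k) ⟨y, by
        simp only [mem_filter, mem_univ, true_and]
        intro i hi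
        obtain ⟨x, hx, hxy⟩ := hy i hi
        exact (hμ i x hx).trans_lt hxy⟩
    exact ⟨g, by simpa using hg, fun y hy => hmax y (by simpa using hy)⟩
  choose g hg hgmax using hgex
  have hdom : ∀ y, ∃ i, r i y ≤ r i (μ i) := fun y => by
    obtain ⟨i, hi⟩ := hs y
    exact ⟨i, hi _ (hμs i)⟩
  have hnot : ∀ k, (∀ x ∈ s, ∃ i, i ≠ k ∧ μ i = x) → g k ∉ s := fun k hk hmem => by
    obtain ⟨i, hi, hix⟩ := hk _ hmem
    have := hg k i hi
    rw [hix] at this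
    exact lt_irrefl _ this
  have hgab : g a ≠ g b := fun h => by
    obtain ⟨i, hi⟩ := hdom (g a)
    by_cases hia : i = a
    · exact absurd (h ▸ hg b i (hia ▸ hab)) (not_lt.2 hi)
    · exact absurd (hg a i hia) (not_lt.2 hi)
  have hund : ∀ k, Undominated r (insert (g k) s) := fun k y => by
    by_contra! hcon
    have hy : ∀ i, i ≠ k → r i (μ i) < r i y := fun i hi => by
      obtain ⟨x, hx, hxy⟩ := hcon i
      rcases mem_insert.1 hx with rfl | hx
      · exact (hg k i hi).trans hxy
      · exact (hμ i x hx).trans_lt hxy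
    obtain ⟨x, hx, hxy⟩ := hcon k
    rcases mem_insert.1 hx with rfl | hx
    · exact absurd (hgmax k y hy) (not_le.2 hxy)
    · obtain ⟨i, hi⟩ := hdom y
      by_cases hik : i = k
      · exact absurd ((hμ k x hx).trans_lt hxy) (not_lt.2 (hik ▸ hi))
      · exact absurd (hy i hik) (not_lt.2 hi)
  have huniq : ∀ x k, x ∉ s → Undominated r (insert x s) →
      (∀ i, i ≠ k → r i (μ i) < r i x) → x = g k := fun x k hx hu hk => by
    refine hr k (le_antisymm (hgmax k x hk) ?_)
    obtain ⟨i, hi⟩ := hu (g k)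
    by_cases hik : i = k
    · subst hik
      exact hi x (mem_insert_self _ _)
    · exact absurd (hg k i hik) (not_lt.2 (hi _ (mem_insert_of_mem (hμs i))))
  have hset : {t : Finset T | Undominated r t ∧ s ⊆ t ∧ t.card = Fintype.card ι} =
      {insert (g a) s, insert (g b) s} := by
    ext t
    simp only [Set.mem_ofPred_eq, Set.mem_insert_iff, Set.mem_singleton_iff]
    constructor
    · rintro ⟨hu, hst, htc⟩
      obtain ⟨x, hx, rfl⟩ := exists_eq_insert_iff.2 ⟨hst, by lia⟩
      have habove : ∀ i, i ≠ a → i ≠ b → r i (μ i) < r i x := fun i hia hib => by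
        obtain ⟨j, hj⟩ := hu (μ i)
        have hij : μ j = μ i :=
          hr j (le_antisymm (hμ j _ (hμs i)) (hj _ (mem_insert_of_mem (hμs j))))
        have hji : j = i := by
          by_cases hja : j = a
          · exact absurd (hcol i (by rw [← hij, hja])) (by tauto)
          · exact hinj hja hia hij
        subst hji
        refine lt_of_le_of_ne (hj x (mem_insert_self _ _)) fun h => hx ?_
        rw [← hr j h]
        exact hμs j
      obtain ⟨k, hk⟩ := hu (μ a)
      have hka : μ k = μ a :=
        hr k (le_antisymm (hμ k _ (hμs a)) (hk _ (mem_insert_of_mem (hμs k))))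
      have hkx : r k (μ k) < r k x := by
        rw [hka]
        refine lt_of_le_of_ne (hk x (mem_insert_self _ _)) fun h => hx ?_
        rw [← hr k h]
        exact hμs a
      rcases hcol k hka with rfl | rfl
      · right
        rw [huniq x b hx hu fun i hib => if hia : i = k then hia ▸ hkx else habove i hia hib]
      · left
        rw [huniq x a hx hu fun i hia => if hib : i = k then hib ▸ hkx else habove i hia hib]
    · rintro (rfl | rfl)
      · exact ⟨hund a, subset_insert _ _, by rw [card_insert_of_notMem (hnot a hsa), hcard]⟩
      · exact ⟨hund b, subset_insert _ _, by rw [card_insert_of_notMem (hnot b hsb), hcard]⟩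
  rw [hset, Set.ncard_pair]
  intro h
  have : g a ∈ insert (g b) s := h ▸ mem_insert_self _ _
  rcases mem_insert.1 this with h | h
  · exact hgab h
  · exact hnot a hsa h

/-- If a set with as many points as there are colours does not see every colour, then the number of
points whose removal leaves exactly the colours other than `a` is even. -/
lemma even_card_filter_image_erase [DecidableEq T] {c : T → ι} {t : Finset T}
    (ht : t.card = Fintype.card ι) (hc : t.image c ≠ univ) (a : ι) :
    Even (t.filter fun x => (t.erase x).image c = univ.erase a).card := by
  rcases (t.filter fun x => (t.erase x).image c = univ.erase a).eq_empty_or_nonempty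
    with h | ⟨x, hx⟩
  · simp [h]
  obtain ⟨hxt, hx⟩ := mem_filter.1 hx
  have hcx : c x ≠ a := fun h => hc <| by
    rw [← insert_erase hxt, image_insert, hx, h, insert_erase (mem_univ a)]
  obtain ⟨y, hy, hyx⟩ : ∃ y ∈ t.erase x, c y = c x := by
    rw [← mem_image, hx]; simpa using hcx
  have hinj : Set.InjOn c (t.erase x) := by
    rw [← card_image_iff, hx, card_erase_of_mem (mem_univ a), card_erase_of_mem hxt, ht, card_univ]
  obtain ⟨hne, hyt⟩ := mem_erase.1 hy
  have : (t.filter fun x => (t.erase x).image c = univ.erase a) = {x, y} := by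
    ext z
    simp only [mem_filter, mem_insert, mem_singleton]
    constructor
    · rintro ⟨hzt, hz⟩
      by_contra! hzxy
      have hzx : z ∈ t.erase x := mem_erase.2 ⟨hzxy.1, hzt⟩
      have hcz : c z ∈ (t.erase z).image c := by
        rw [hz, ← hx]; exact mem_image_of_mem c hzx
      obtain ⟨w, hw, hwz⟩ := mem_image.1 hcz
      obtain ⟨hwz', hwt⟩ := mem_erase.1 hw
      by_cases hwx : w = x
      · subst hwx
        exact hzxy.2 (hinj hzx hy (hwz.symm.trans hyx.symm))
      · exact hwz' (hinj (mem_erase.2 ⟨hwx, hwt⟩) hzx hwz)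
    · rintro (rfl | rfl)
      · exact ⟨hxt, hx⟩
      · refine ⟨hyt, ?_⟩
        rw [← hx]
        ext k
        simp only [mem_image, mem_erase]
        constructor
        · rintro ⟨w, ⟨hw1, hw2⟩, rfl⟩
          by_cases hwx : w = x
          · exact ⟨z, ⟨hne, hyt⟩, by rw [hwx, hyx]⟩
          · exact ⟨w, ⟨hwx, hw2⟩, rfl⟩
        · rintro ⟨w, ⟨hw1, hw2⟩, rfl⟩
          by_cases hwy : w = z
          · exact ⟨x, ⟨hne.symm, hxt⟩, by rw [hwy, hyx]⟩
          · exact ⟨w, ⟨hwy, hw2⟩, rfl⟩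
  rw [this, card_pair hne.symm]
  exact even_two

/-- The set of all slack points but `e a` extends to exactly one undominated set by adding a
point. -/
lemma ncard_undominated_extensions_slack [Fintype T] {r : ι → T → α}
    (hr : ∀ i, Function.Injective (r i)) {e : ι → T} (he : Function.Injective e)
    (hmin : ∀ i y, r i (e i) ≤ r i y)
    (hslack : ∀ i j y, i ≠ j → y ∉ Set.range e → r i y < r i (e j))
    (hne : ∃ y, y ∉ Set.range e) (a : ι) :
    {t : Finset T | Undominated r t ∧ (univ.erase a).map ⟨e, he⟩ ⊆ t ∧
      t.card = Fintype.card ι}.ncard = 1 := by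
  classical
  set s : Finset T := (univ.erase a).map ⟨e, he⟩ with hs
  have hcard : s.card + 1 = Fintype.card ι := by
    rw [hs, card_map, card_erase_add_one (mem_univ a), card_univ]
  have hes : ∀ i, i ≠ a → e i ∈ s := fun i hi => by simpa [hs, he.eq_iff] using hi
  obtain ⟨y, hy⟩ := hne
  obtain ⟨g, hg, hgmax⟩ := (univ.filter fun y => y ∉ Set.range e).exists_max_image (r a)
    ⟨y, by simpa using hy⟩
  replace hg : g ∉ Set.range e := (mem_filter.1 hg).2
  replace hgmax : ∀ y, y ∉ Set.range e → r a y ≤ r a g := fun y hy =>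
    hgmax y (by simpa using hy)
  have hgs : g ∉ s := fun h => by
    obtain ⟨i, -, hi⟩ := mem_map.1 h
    exact hg ⟨i, hi⟩
  have hlt : ∀ i y, y ∉ Set.range e → r i (e i) < r i y := fun i y hy =>
    lt_of_le_of_ne (hmin i y) fun h => hy ⟨i, hr i h⟩
  rw [Set.ncard_eq_one]
  refine ⟨insert g s, ?_⟩
  ext t
  simp only [Set.mem_ofPred_eq, Set.mem_singleton_iff]
  constructor
  · rintro ⟨hu, hst, htc⟩
    obtain ⟨x, hx, rfl⟩ := exists_eq_insert_iff.2 ⟨hst, by lia⟩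
    obtain ⟨i, hi⟩ := hu g
    obtain rfl : i = a := by
      by_contra hia
      exact absurd (hi _ (mem_insert_of_mem (hes i hia))) (not_le.2 (hlt i g hg))
    have hgx := hi x (mem_insert_self _ _)
    have hxe : x ∉ Set.range e := by
      rintro ⟨j, rfl⟩
      by_cases hj : j = i
      · subst hj
        exact absurd hgx (not_le.2 (hlt j g hg))
      · exact hx (hes j hj)
    rw [hr i (le_antisymm (hgmax x hxe) hgx)]
  · rintro rfl
    refine ⟨fun y => ?_, subset_insert _ _, by rw [card_insert_of_notMem hgs, hcard]⟩
    by_cases hy : y ∈ Set.range e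
    · obtain ⟨i, rfl⟩ := hy
      exact ⟨i, fun x _ => hmin i x⟩
    · refine ⟨a, fun x hx => ?_⟩
      rcases mem_insert.1 hx with rfl | hx
      · exact hgmax y hy
      · obtain ⟨j, hj, rfl⟩ := mem_map.1 hx
        exact (hslack a j y (by simpa using (ne_of_mem_erase hj).symm) hy).le

/-- Scarf's lemma for rankings with slack points: some undominated set sees every colour. -/
lemma exists_undominated_image_eq_univ [Nonempty ι] [Fintype T] [DecidableEq T] {r : ι → T → α}
    (hr : ∀ i, Function.Injective (r i)) {e : ι → T} {c : T → ι} (hce : ∀ i, c (e i) = i)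
    (hmin : ∀ i y, r i (e i) ≤ r i y)
    (hslack : ∀ i j y, i ≠ j → y ∉ Set.range e → r i y < r i (e j))
    (hne : ∃ y, y ∉ Set.range e) :
    ∃ t : Finset T, Undominated r t ∧ t.image c = univ := by
  classical
  by_contra! hcon
  obtain ⟨a⟩ := ‹Nonempty ι›
  have he : Function.Injective e := Function.LeftInverse.injective hce
  set rooms : Finset (Finset T) :=
    univ.filter fun t => Undominated r t ∧ t.card = Fintype.card ι with hrooms
  set doors : Finset (Finset T) := univ.filter fun s =>
    Undominated r s ∧ s.card + 1 = Fintype.card ι ∧ s.image c = univ.erase a with hdoors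
  set s₀ : Finset T := (univ.erase a).map ⟨e, he⟩ with hs₀
  have habove : ∀ s, #(rooms.bipartiteAbove (· ⊆ ·) s) =
      {t : Finset T | Undominated r t ∧ s ⊆ t ∧ t.card = Fintype.card ι}.ncard := fun s => by
    rw [← Set.ncard_coe_finset]
    congr 1
    ext t
    simp [hrooms, bipartiteAbove]
    tauto
  have hone := ncard_undominated_extensions_slack hr he hmin hslack hne a
  have hs₀mem : s₀ ∈ doors := by
    obtain ⟨t, ht, hst, -⟩ := Set.nonempty_of_ncard_ne_zero (by rw [hone]; exact one_ne_zero)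
    refine mem_filter.2 ⟨mem_univ _, fun y => ?_, ?_, ?_⟩
    · obtain ⟨i, hi⟩ := ht y
      exact ⟨i, fun x hx => hi x (hst hx)⟩
    · rw [hs₀, card_map, card_erase_add_one (mem_univ a), card_univ]
    · ext i
      simp [hs₀, hce, he.eq_iff]
  have htwo : ∀ s ∈ doors.erase s₀, #(rooms.bipartiteAbove (· ⊆ ·) s) = 2 := fun s hs => by
    obtain ⟨hss₀, hs⟩ := mem_erase.1 hs
    obtain ⟨-, hu, hcard, hcol⟩ := mem_filter.1 hs
    obtain ⟨x, hx, hxe⟩ : ∃ x ∈ s, x ∉ Set.range e := by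
      by_contra! hall
      refine hss₀ (eq_of_subset_of_card_le (fun x hx => ?_) ?_)
      · obtain ⟨i, rfl⟩ := hall x hx
        have : c (e i) ∈ univ.erase a := hcol ▸ mem_image_of_mem c hx
        rw [hce] at this
        exact mem_map.2 ⟨i, this, rfl⟩
      · rw [hs₀, card_map, card_erase_of_mem (mem_univ a), card_univ]; lia
    rw [habove]
    exact hu.ncard_extensions hr hcard ⟨x, hx⟩ fun k =>
      ⟨e k, fun i hi => ⟨x, hx, hslack i k x hi hxe⟩⟩
  have hbelow : ∀ t ∈ rooms, Even #(doors.bipartiteBelow (· ⊆ ·) t) := fun t ht => by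
    obtain ⟨-, hu, hcard⟩ := mem_filter.1 ht
    have : doors.bipartiteBelow (· ⊆ ·) t =
        (t.filter fun x => (t.erase x).image c = univ.erase a).image t.erase := by
      ext s
      simp only [bipartiteBelow, mem_filter, mem_image, hdoors, mem_univ, true_and]
      constructor
      · rintro ⟨⟨-, hsc, hcol⟩, hst⟩
        obtain ⟨x, hx, rfl⟩ := exists_eq_insert_iff.2 ⟨hst, by lia⟩
        have hxs : (insert x s).erase x = s := erase_insert hx
        exact ⟨x, ⟨mem_insert_self _ _, by rw [hxs, hcol]⟩, hxs⟩
      · rintro ⟨x, ⟨hx, hcol⟩, rfl⟩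
        refine ⟨⟨fun y => ?_, by rw [card_erase_add_one hx, hcard], hcol⟩, erase_subset _ _⟩
        obtain ⟨i, hi⟩ := hu y
        exact ⟨i, fun z hz => hi z (mem_of_mem_erase hz)⟩
    rw [this, card_image_of_injOn ((erase_injOn t).mono fun x hx => (mem_filter.1 hx).1)]
    exact even_card_filter_image_erase hcard (hcon t hu) a
  have hsum := sum_card_bipartiteAbove_eq_sum_card_bipartiteBelow (s := doors) (t := rooms)
    (fun s t : Finset T => s ⊆ t)
  rw [← add_sum_erase _ _ hs₀mem, sum_congr rfl htwo, habove, hone, sum_const, smul_eq_mul] at hsum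
  have := even_sum _ hbelow
  rw [← hsum] at this
  grind

end Scarf

/-- Coordinates of points together with slack points: the slack point `j` has a very small `j`-th
coordinate and very large other coordinates. -/
def slackCoord {ι T : Type*} [DecidableEq ι] (p : T → ι → ℝ) : T ⊕ ι → ι → ℝ :=
  Sum.elim p fun j i => if i = j then -1 else 2

/-- For finitely many coloured points with coordinates in `[0, 1]`, one can choose for each colour
a point or slack point of that colour so that no given point exceeds all coordinatewise minima. -/
lemma exists_colorful_slackCoord {ι T : Type*} [Fintype ι] [DecidableEq ι] [Nonempty ι]
    [Fintype T] [Nonempty T] (p : T → ι → ℝ) (hp : ∀ x i, p x i ∈ Set.Icc (0 : ℝ) 1) (c : T → ι) :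
    ∃ σ : ι → T ⊕ ι, (∀ j, Sum.elim c id (σ j) = j) ∧
      ∀ y, ∃ i, ∀ j, p y i ≤ slackCoord p (σ j) i := by
  classical
  obtain ⟨t, ht, hc⟩ := exists_undominated_image_eq_univ
    (r := fun i y => toLex (slackCoord p y i, Fintype.equivFin (T ⊕ ι) y)) (e := Sum.inr)
    (c := Sum.elim c id)
    (fun i x y h => (Fintype.equivFin (T ⊕ ι)).injective (congrArg (fun z => (ofLex z).2) h))
    (fun i => rfl)
    (fun i y => by
      rcases y with x | j
      · refine (Prod.Lex.toLex_lt_toLex.2 (Or.inl ?_)).le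
        have := (hp x i).1
        simp only [slackCoord, Sum.elim_inl, Sum.elim_inr, if_true]
        linarith
      · by_cases hij : i = j
        · rw [hij]
        · refine (Prod.Lex.toLex_lt_toLex.2 (Or.inl ?_)).le
          simp only [slackCoord, Sum.elim_inr, if_true, if_neg hij]
          norm_num)
    (fun i j y hij hy => by
      rcases y with x | k
      · refine Prod.Lex.toLex_lt_toLex.2 (Or.inl ?_)
        have := (hp x i).2
        simp only [slackCoord, Sum.elim_inl, Sum.elim_inr, if_neg hij]
        linarith
      · exact absurd ⟨k, rfl⟩ hy)
    ⟨Sum.inl (Classical.arbitrary T), by simp⟩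
  have hcol : ∀ j, ∃ x ∈ t, Sum.elim c id x = j := fun j => by
    rw [← mem_image, hc]; exact mem_univ j
  choose σ hσt hσ using hcol
  refine ⟨σ, hσ, fun y => ?_⟩
  obtain ⟨i, hi⟩ := ht (Sum.inl y)
  refine ⟨i, fun j => ?_⟩
  rcases Prod.Lex.toLex_le_toLex.1 (hi _ (hσt j)) with h | h
  · exact h.le
  · exact h.1.le

/-- Compactness version of `exists_colorful_slackCoord` for closed colour classes covering the
simplex. -/
lemma exists_colorful_slackCoord_stdSimplex {ι : Type*} [Fintype ι] [DecidableEq ι] [Nonempty ι]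
    (F : ι → Set (stdSimplex ℝ ι)) (hF : ∀ i, IsClosed (F i)) (hcov : ∀ x, ∃ i, x ∈ F i) :
    ∃ σ : ι → stdSimplex ℝ ι ⊕ ι, (∀ j x, σ j = Sum.inl x → x ∈ F j) ∧
      (∀ j k, σ j = Sum.inr k → k = j) ∧
      ∀ y : stdSimplex ℝ ι, ∃ i, ∀ j, y.1 i ≤ slackCoord Subtype.val (σ j) i := by
  classical
  let _ : TopologicalSpace ι := ⊥
  have : DiscreteTopology ι := ⟨rfl⟩
  have : CompactSpace (stdSimplex ℝ ι) := isCompact_iff_compactSpace.1 (isCompact_stdSimplex ℝ ι)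
  choose c hc using hcov
  let G : ι → Set (stdSimplex ℝ ι ⊕ ι) := fun j => Set.image Sum.inl (F j) ∪ {Sum.inr j}
  have hG : ∀ j, IsClosed (G j) := fun j =>
    (Topology.IsClosedEmbedding.inl.isClosedMap _ (hF j)).union isClosed_singleton
  have hcont : ∀ i, Continuous fun z : stdSimplex ℝ ι ⊕ ι => slackCoord Subtype.val z i :=
    fun i => continuous_sum_dom.2
      ⟨(continuous_apply i).comp continuous_subtype_val, continuous_of_discreteTopology⟩
  let K : stdSimplex ℝ ι → Set (ι → stdSimplex ℝ ι ⊕ ι) := fun y =>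
    {σ | (∀ j, σ j ∈ G j) ∧ ∃ i, ∀ j, y.1 i ≤ slackCoord Subtype.val (σ j) i}
  have hK : ∀ y, IsClosed (K y) := fun y => by
    refine IsClosed.inter (s₁ := {σ : ι → stdSimplex ℝ ι ⊕ ι | ∀ j, σ j ∈ G j})
      (s₂ := {σ : ι → stdSimplex ℝ ι ⊕ ι |
        ∃ i, ∀ j, y.1 i ≤ slackCoord Subtype.val (σ j) i}) ?_ ?_
    · simp only [Set.ofPred_forall]
      exact isClosed_iInter fun j => (hG j).preimage (continuous_apply j)
    · simp only [Set.ofPred_exists, Set.ofPred_forall]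
      exact isClosed_iUnion_of_finite fun i => isClosed_iInter fun j =>
        isClosed_le continuous_const ((hcont i).comp (continuous_apply j))
  have hfin : ∀ S : Finset (stdSimplex ℝ ι), (⋂ y ∈ S, K y).Nonempty := fun S => by
    let x₀ : stdSimplex ℝ ι := Classical.arbitrary _
    have : Nonempty ↥(insert x₀ S) := ⟨⟨x₀, mem_insert_self _ _⟩⟩
    obtain ⟨σ, hσ, hdom⟩ := exists_colorful_slackCoord
      (fun x : ↥(insert x₀ S) => x.1.1)
      (fun x i => ⟨x.1.2.1 i, x.1.2.2 ▸ single_le_sum (fun j _ => x.1.2.1 j) (mem_univ i)⟩)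
      (fun x => c x.1)
    refine ⟨fun j => Sum.map Subtype.val id (σ j), Set.mem_iInter₂.2 fun y hy => ⟨fun j => ?_, ?_⟩⟩
    · have := hσ j
      rcases h : σ j with x | k
      · rw [h, Sum.elim_inl] at this
        simpa [G, h, this] using hc x.1
      · rw [h, Sum.elim_inr, id] at this
        simp [G, h, this]
    · obtain ⟨i, hi⟩ := hdom ⟨y, mem_insert_of_mem hy⟩
      refine ⟨i, fun j => (hi j).trans (le_of_eq ?_)⟩
      dsimp only
      rcases σ j with x | k <;> rfl
  obtain ⟨σ, hσ⟩ := CompactSpace.iInter_nonempty hK hfin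
  rw [Set.mem_iInter] at hσ
  have hσG := (hσ (Classical.arbitrary _)).1
  refine ⟨σ, fun j x h => ?_, fun j k h => ?_, fun y => (hσ y).2⟩
  · simpa [G, h] using hσG j
  · simpa [G, h] using hσG j

/-- If closed sets `F i` cover the simplex and each `F i` contains the face opposite to vertex `i`,
then they have a common point. -/
lemma exists_forall_mem_of_isClosed_of_face_subset {ι : Type*} [Fintype ι] [Nonempty ι]
    (F : ι → Set (stdSimplex ℝ ι)) (hF : ∀ i, IsClosed (F i)) (hcov : ∀ x, ∃ i, x ∈ F i)
    (hface : ∀ i (x : stdSimplex ℝ ι), x.1 i = 0 → x ∈ F i) : ∃ x, ∀ i, x ∈ F i := by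
  classical
  obtain ⟨σ, hσF, hσs, hdom⟩ := exists_colorful_slackCoord_stdSimplex F hF hcov
  choose m hm using fun i => Finite.exists_min fun j => slackCoord Subtype.val (σ j) i
  let u : ι → ℝ := fun i => max (slackCoord Subtype.val (σ (m i)) i) 0
  have hu0 : ∀ i, 0 ≤ u i := fun i => le_max_right _ _
  have hsum : 1 ≤ ∑ i, u i := by
    by_contra! hlt
    have hcard : (0 : ℝ) < Fintype.card ι := by exact_mod_cast Fintype.card_pos
    have hδ : 0 < (1 - ∑ i, u i) / Fintype.card ι := div_pos (by linarith) hcard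
    obtain ⟨i, hi⟩ := hdom ⟨fun i => u i + (1 - ∑ i, u i) / Fintype.card ι,
      fun i => add_nonneg (hu0 i) hδ.le, by
        rw [sum_add_distrib, sum_const, card_univ, nsmul_eq_mul, mul_div_cancel₀ _ hcard.ne.symm]
        ring⟩
    have h := hi (m i)
    have : slackCoord Subtype.val (σ (m i)) i ≤ u i := le_max_left _ _
    dsimp only at h
    linarith
  have hinl : ∀ j x, σ j = Sum.inl x → x.1 = u := fun j x hx => by
    have hle : ∀ i ∈ univ, u i ≤ x.1 i := fun i _ => by
      refine max_le ((hm i j).trans (le_of_eq ?_)) (x.2.1 i)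
      rw [hx]
      rfl
    have heq := (sum_eq_sum_iff_of_le hle).1
      (le_antisymm (sum_le_sum hle) (by rw [x.2.2]; exact hsum))
    exact funext fun i => (heq i (mem_univ i)).symm
  have hinr : ∀ j k, σ j = Sum.inr k → u j = 0 := fun j k hk => by
    obtain rfl := hσs j k hk
    refine max_eq_right ((hm k k).trans ?_)
    rw [hk]
    simp [slackCoord]
  obtain ⟨x, hx⟩ : ∃ x : stdSimplex ℝ ι, x.1 = u := by
    by_contra! hcon
    have : ∀ j, u j = 0 := fun j => by
      rcases h : σ j with x | k
      · exact absurd (hinl j x h) (hcon x)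
      · exact hinr j k h
    norm_num [this] at hsum
  refine ⟨x, fun j => ?_⟩
  rcases h : σ j with y | k
  · rw [Subtype.ext (hx.trans (hinl j y h).symm)]
    exact hσF j y h
  · exact hface j x (hx ▸ hinr j k h)

/-- If `w` is continuous on the simplex with `∑ i, l i * w l i = 0`, then `w` takes a value with
nonnegative coordinates. -/
lemma exists_nonneg_of_sum_mul_eq_zero {ι : Type*} [Fintype ι] [Nonempty ι]
    {w : (ι → ℝ) → ι → ℝ} (hw : ContinuousOn w (stdSimplex ℝ ι))
    (hsum : ∀ l ∈ stdSimplex ℝ ι, ∑ i, l i * w l i = 0) :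
    ∃ l ∈ stdSimplex ℝ ι, ∀ i, 0 ≤ w l i := by
  have hcont : ∀ i, Continuous fun l : stdSimplex ℝ ι => max (-w l.1 i) 0 := fun i =>
    (((continuous_apply i).comp hw.domRestrict).neg).max continuous_const
  obtain ⟨x, hx⟩ := exists_forall_mem_of_isClosed_of_face_subset
    (fun i => {l : stdSimplex ℝ ι | l.1 i * ∑ j, max (-w l.1 j) 0 ≤ max (-w l.1 i) 0})
    (fun i => isClosed_le
      (((continuous_apply i).comp continuous_subtype_val).mul
        (continuous_finsetSum _ fun j _ => hcont j)) (hcont i))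
    (fun l => by
      by_contra! hlt
      simp only [Set.mem_ofPred_eq, not_le] at hlt
      have := sum_lt_sum_of_nonempty univ_nonempty fun i _ => hlt i
      rw [← sum_mul, l.2.2, one_mul] at this
      exact lt_irrefl _ this)
    (fun i l hl => by
      simp only [Set.mem_ofPred_eq, hl, zero_mul]
      exact le_max_right _ _)
  simp only [Set.mem_ofPred_eq] at hx
  have heq := (sum_eq_sum_iff_of_le fun i _ => hx i).1 (by rw [← sum_mul, x.2.2, one_mul])
  have hzero : ∑ i, max (-w x.1 i) 0 * w x.1 i = 0 := by
    rw [← sum_congr rfl fun i hi => congrArg (· * w x.1 i) (heq i hi)]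
    simp_rw [mul_right_comm]
    rw [← sum_mul, hsum x.1 x.2, zero_mul]
  have hterm : ∀ i ∈ univ, max (-w x.1 i) 0 * w x.1 i ≤ 0 := fun i _ => by
    rcases le_total (w x.1 i) 0 with h | h
    · exact mul_nonpos_of_nonneg_of_nonpos (le_max_right _ _) h
    · rw [max_eq_right (by linarith), zero_mul]
  refine ⟨x.1, x.2, fun i => ?_⟩
  by_contra! hi
  have := (sum_eq_zero_iff_of_nonpos hterm).1 hzero i (mem_univ i)
  rw [max_eq_left (by linarith)] at this
  nlinarith

theorem stmt0 (n : ℕ) (hn : 1 ≤ n) (d : Fin n → ℝ) (v : (Fin n → ℝ) → Fin n → ℝ)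
    (hv : ContinuousOn v (stdSimplex ℝ (Fin n)))
    (K₁ K₂ : Finset (Fin n)) (hpart : ∀ k, k ∈ K₁ ↔ k ∉ K₂)
    (h1 : ∀ l ∈ stdSimplex ℝ (Fin n), ∑ i, l i * v l i = ∑ i, l i * d i)
    (h2 : ∀ k ∈ K₁, ∀ l ∈ stdSimplex ℝ (Fin n), l k = 0 → v l k < d k)
    (h3 : ∀ k ∈ K₂, ∀ l ∈ stdSimplex ℝ (Fin n), v l k ≤ d k) :
    ∃ l ∈ stdSimplex ℝ (Fin n), v l = d := by
  have : Nonempty (Fin n) := ⟨⟨0, hn⟩⟩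
  have hsum : ∀ l ∈ stdSimplex ℝ (Fin n), ∑ i, l i * (v l i - d i) = 0 := fun l hl => by
    simp_rw [mul_sub]
    rw [sum_sub_distrib, h1 l hl, sub_self]
  obtain ⟨l, hl, hnonneg⟩ := exists_nonneg_of_sum_mul_eq_zero (w := fun l i => v l i - d i)
    (hv.sub continuousOn_const) hsum
  refine ⟨l, hl, funext fun k => ?_⟩
  have hle : 0 ≤ v l k - d k := hnonneg k
  by_cases hk : k ∈ K₂
  · linarith [h3 k hk l hl]
  · have hlk : l k ≠ 0 := fun h => by linarith [h2 k ((hpart k).2 hk) l hl h]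
    have hk0 := (sum_eq_zero_iff_of_nonneg fun i _ => mul_nonneg (hl.1 i) (hnonneg i)).1
      (hsum l hl) k (mem_univ k)
    linarith [(mul_eq_zero.1 hk0).resolve_left hlk]
end

section
/- Let v : Δ_{n+1} → ℝ^{n+1} be continuous, d ∈ ℝ^{n+1}, and suppose v_{n+1}(λ) < d_{n+1} for all λ ∈ Δ_{n+1} with λ_{n+1} = 0, while v_{n+1}(λ) ≥ d_{n+1} for all λ ∈ Δ_{n+1} in some ε-neighborhood of the vertex e_{n+1} (for some ε > 0). For t ∈ Δₙ define β(t) = inf { b ∈ [0,1] : ∀ γ ∈ [b,1], v_{n+1}(γt₁, …, γtₙ, 1−γ) < d_{n+1} }. Then for every t ∈ Δₙ, β(t) ≥ ε/√2 > 0 and v_{n+1}(β(t)t₁, …, β(t)tₙ, 1−β(t)) = d_{n+1}. -/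
/-- The infimum of the levels beyond which a continuous function stays below `c` is a level at
which it takes the value `c`. -/
theorem apply_sInf_lt_on_Icc_eq {f : ℝ → ℝ} {c : ℝ} (hf : ContinuousOn f (Set.Icc 0 1))
    (h0 : c ≤ f 0) (h1 : f 1 < c) :
    f (sInf {b : ℝ | b ∈ Set.Icc (0 : ℝ) 1 ∧ ∀ γ ∈ Set.Icc b 1, f γ < c}) = c := by
  have hclosed : IsClosed (Set.Icc (0 : ℝ) 1 ∩ f ⁻¹' Set.Ici c) :=
    hf.preimage_isClosed_of_isClosed isClosed_Icc isClosed_Ici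
  obtain ⟨m, ⟨⟨hm0, hm1⟩, hmc⟩, hmax⟩ :=
    (isCompact_Icc.of_isClosed_subset hclosed Set.inter_subset_left).exists_isGreatest
      ⟨0, ⟨le_rfl, zero_le_one⟩, h0⟩
  have hmc : c ≤ f m := hmc
  have hlt : m < 1 := lt_of_le_of_ne hm1 (by rintro rfl; exact hmc.not_gt h1)
  have hS : {b : ℝ | b ∈ Set.Icc (0 : ℝ) 1 ∧ ∀ γ ∈ Set.Icc b 1, f γ < c} = Set.Ioc m 1 := by
    ext b
    constructor
    · rintro ⟨⟨_, hb1⟩, hb⟩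
      exact ⟨lt_of_not_ge fun h => hmc.not_gt (hb m ⟨h, hm1⟩), hb1⟩
    · rintro ⟨hmb, hb1⟩
      refine ⟨⟨hm0.trans hmb.le, hb1⟩, fun γ hγ => lt_of_not_ge fun h => ?_⟩
      have : γ ≤ m := hmax ⟨⟨(hm0.trans hmb.le).trans hγ.1, hγ.2⟩, h⟩
      linarith [hγ.1]
  rw [hS, csInf_Ioc hlt]
  obtain ⟨x, hx, hxc⟩ := intermediate_value_Icc' hm1 (hf.mono (Set.Icc_subset_Icc_left hm0))
    ⟨h1.le, hmc⟩
  have hxm : x ≤ m := hmax ⟨⟨hm0.trans hx.1, hx.2⟩, hxc.ge⟩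
  rwa [le_antisymm hxm hx.1] at hxc

theorem snoc_mul_mem_stdSimplex {n : ℕ} {t : Fin n → ℝ} (ht : t ∈ stdSimplex ℝ (Fin n)) {γ : ℝ}
    (hγ : γ ∈ Set.Icc (0 : ℝ) 1) :
    (Fin.snoc (fun i => γ * t i) (1 - γ) : Fin (n + 1) → ℝ) ∈ stdSimplex ℝ (Fin (n + 1)) := by
  refine ⟨fun i => ?_, ?_⟩
  · induction i using Fin.lastCases with
    | last => simpa using hγ.2
    | cast i => simpa using mul_nonneg hγ.1 (ht.1 i)
  · simp [Fin.sum_univ_castSucc, ← Finset.mul_sum, ht.2]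

theorem sqrt_sum_snoc_sub_vertex_le {n : ℕ} {t : Fin n → ℝ} (ht : t ∈ stdSimplex ℝ (Fin n))
    {γ : ℝ} (hγ : 0 ≤ γ) :
    Real.sqrt (∑ i, ((Fin.snoc (fun i => γ * t i) (1 - γ) : Fin (n + 1) → ℝ) i -
      (if i = Fin.last n then (1 : ℝ) else 0)) ^ 2) ≤ γ * Real.sqrt 2 := by
  have hsq : ∑ i, t i ^ 2 ≤ 1 := by
    rw [← ht.2]
    refine Finset.sum_le_sum fun i _ => ?_
    have hi : t i ≤ 1 := ht.2 ▸ Finset.single_le_sum (fun j _ => ht.1 j) (Finset.mem_univ i)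
    nlinarith [ht.1 i]
  refine Real.sqrt_le_iff.2 ⟨by positivity, ?_⟩
  rw [mul_pow, Real.sq_sqrt zero_le_two]
  simp only [Fin.sum_univ_castSucc, Fin.snoc_castSucc, Fin.snoc_last, Fin.castSucc_ne_last,
    if_false, if_true, sub_zero, mul_pow, ← Finset.mul_sum]
  nlinarith [sq_nonneg γ]

theorem stmt4 (n : ℕ) (v : (Fin (n + 1) → ℝ) → Fin (n + 1) → ℝ) (d : Fin (n + 1) → ℝ)
    (hv : ContinuousOn v (stdSimplex ℝ (Fin (n + 1))))
    (ε : ℝ) (hε : 0 < ε)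
    (hfacet : ∀ l ∈ stdSimplex ℝ (Fin (n + 1)), l (Fin.last n) = 0 →
      v l (Fin.last n) < d (Fin.last n))
    (hnbhd : ∀ l ∈ stdSimplex ℝ (Fin (n + 1)),
      Real.sqrt (∑ i, (l i - (if i = Fin.last n then (1 : ℝ) else 0)) ^ 2) < ε →
      d (Fin.last n) ≤ v l (Fin.last n)) :
    ∀ t ∈ stdSimplex ℝ (Fin n),
      ε / Real.sqrt 2 ≤
        sInf {b : ℝ | b ∈ Set.Icc (0 : ℝ) 1 ∧ ∀ γ ∈ Set.Icc b 1,
          v (Fin.snoc (fun i => γ * t i) (1 - γ)) (Fin.last n) < d (Fin.last n)} ∧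
      v (Fin.snoc
          (fun i => (sInf {b : ℝ | b ∈ Set.Icc (0 : ℝ) 1 ∧ ∀ γ ∈ Set.Icc b 1,
            v (Fin.snoc (fun i => γ * t i) (1 - γ)) (Fin.last n) < d (Fin.last n)}) * t i)
          (1 - sInf {b : ℝ | b ∈ Set.Icc (0 : ℝ) 1 ∧ ∀ γ ∈ Set.Icc b 1,
            v (Fin.snoc (fun i => γ * t i) (1 - γ)) (Fin.last n) < d (Fin.last n)}))
        (Fin.last n) = d (Fin.last n) := by
  intro t ht
  let f : ℝ → ℝ := fun γ => v (Fin.snoc (fun i => γ * t i) (1 - γ)) (Fin.last n)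
  have hf : ContinuousOn f (Set.Icc 0 1) := by
    have hpath : Continuous fun γ : ℝ =>
        (Fin.snoc (fun i => γ * t i) (1 - γ) : Fin (n + 1) → ℝ) := by
      refine continuous_pi fun i => ?_
      induction i using Fin.lastCases with
      | last => simp only [Fin.snoc_last]; fun_prop
      | cast i => simp only [Fin.snoc_castSucc]; fun_prop
    exact (continuous_apply (Fin.last n)).comp_continuousOn
      (hv.comp hpath.continuousOn fun γ hγ => snoc_mul_mem_stdSimplex ht hγ)
  have hnear : ∀ γ ∈ Set.Icc (0 : ℝ) 1, γ * Real.sqrt 2 < ε → d (Fin.last n) ≤ f γ :=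
    fun γ hγ h => hnbhd _ (snoc_mul_mem_stdSimplex ht hγ)
      ((sqrt_sum_snoc_sub_vertex_le ht hγ.1).trans_lt h)
  have h1 : f 1 < d (Fin.last n) :=
    hfacet _ (snoc_mul_mem_stdSimplex ht ⟨zero_le_one, le_rfl⟩) (by simp)
  refine ⟨le_csInf ⟨1, ⟨zero_le_one, le_rfl⟩, fun γ hγ => ?_⟩ fun b hb => ?_,
    apply_sInf_lt_on_Icc_eq hf (hnear 0 ⟨le_rfl, zero_le_one⟩ (by simpa using hε)) h1⟩
  · rw [le_antisymm hγ.2 hγ.1]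
    exact h1
  · rw [div_le_iff₀ (by positivity)]
    exact le_of_not_gt fun h => (hnear b hb.1 h).not_gt (hb.2 b ⟨le_rfl, hb.1.2⟩)
end
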